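/- Let P be S_k or A_k acting naturally on {1,…,k} with k ≥ 2, let Q = P_1 ≅ S_{k−1} or A_{k−1}, let T be a nonabelian simple group, and let φ: Q → Aut(T) be a homomorphism with Inn(T) ≤ φ(Q). Then T ≅ A_{k−1} and k ≥ 6. -/

import Mathlib

theorem aux_solv (n : ℕ) (hn : n ≤ 4) : Group.IsSolvable (alternatingGroup (Fin n)) := by
  rcases Nat.lt_or_ge n 4 with h | h
  · have : IsMulCommutative (alternatingGroup (Fin n)) :=
      alternatingGroup.isMulCommutative_of_card_le_three (by simp; omega)
    exact Group.isSolvable_of_comm fun a b => this.is_comm.comm a b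
  · obtain rfl : n = 4 := by omega
    have h4 : Nat.card (Fin 4) = 4 := by simp
    have e := alternatingGroup.kleinFour_eq_commutator h4
    have hK := alternatingGroup.kleinFour_isKleinFour h4
    have := alternatingGroup.normal_kleinFour h4
    refine ⟨2, ?_⟩
    rw [derivedSeries_succ, derivedSeries_one, ← e, Subgroup.commutator_eq_bot_iff_le_centralizer]
    intro a ha b hb
    exact congrArg Subtype.val (hK.isMulCommutative.is_comm.comm (⟨b, hb⟩ : alternatingGroup.kleinFour (Fin 4)) ⟨a, ha⟩)

theorem aux_conj_range_normal {T : Type*} [Group T] : (MulAut.conj (G := T)).range.Normal := by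
  constructor
  rintro _ ⟨t, rfl⟩ f
  refine ⟨f t, ?_⟩
  ext x
  simp [MulAut.conj_apply]

theorem aux_conj_inj {T : Type*} [Group T] (hT : IsSimpleGroup T)
    (hTnab : ∃ a b : T, a * b ≠ b * a) : Function.Injective (MulAut.conj (G := T)) := by
  rw [← MonoidHom.ker_eq_bot_iff]
  refine (hT.eq_bot_or_eq_top_of_normal _ inferInstance).resolve_right fun h => ?_
  obtain ⟨a, b, hab⟩ := hTnab
  have ha : a ∈ (MulAut.conj (G := T)).ker := h ▸ Subgroup.mem_top a
  have := congrArg (fun f : MulAut T => f b) (MonoidHom.mem_ker.1 ha)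
  simp only [MulAut.conj_apply, MulAut.one_apply] at this
  exact hab (mul_inv_eq_iff_eq_mul.1 this)

theorem aux_range {T Q A : Type*} [Group T] [Group Q] [Group A] (hT : IsSimpleGroup T)
    (hTnab : ∃ a b : T, a * b ≠ b * a) (φ : Q →* MulAut T)
    (hInn : (MulAut.conj (G := T)).range ≤ φ.range)
    (g : A →* Q) (hg : commutator Q ≤ g.range) :
    (MulAut.conj (G := T)).range ≤ (φ.comp g).range := by
  have hp : commutator T = ⊤ := by
    refine (hT.eq_bot_or_eq_top_of_normal _ inferInstance).resolve_left fun h => ?_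
    obtain ⟨a, b, hab⟩ := hTnab
    rw [commutator_def, Subgroup.commutator_eq_bot_iff_le_centralizer] at h
    exact hab (h (Subgroup.mem_top b) a (Subgroup.mem_top a))
  calc (MulAut.conj (G := T)).range = Subgroup.map MulAut.conj (commutator T) := by
        rw [hp, MonoidHom.range_eq_map]
    _ = ⁅(MulAut.conj (G := T)).range, (MulAut.conj (G := T)).range⁆ := by
        rw [commutator_def, Subgroup.map_commutator, MonoidHom.range_eq_map]
    _ ≤ ⁅φ.range, φ.range⁆ := Subgroup.commutator_mono hInn hInn
    _ = Subgroup.map φ (commutator Q) := by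
        rw [commutator_def, Subgroup.map_commutator, MonoidHom.range_eq_map]
    _ ≤ Subgroup.map φ g.range := Subgroup.map_mono hg
    _ = (φ.comp g).range := MonoidHom.map_range _ _

theorem aux_main {T : Type*} [Group T] (hT : IsSimpleGroup T)
    (hTnab : ∃ a b : T, a * b ≠ b * a) (n : ℕ) (h : alternatingGroup (Fin n) →* MulAut T)
    (hInn : (MulAut.conj (G := T)).range ≤ h.range) :
    Nonempty (T ≃* alternatingGroup (Fin n)) ∧ 5 ≤ n := by
  have hinj := aux_conj_inj hT hTnab
  rcases Nat.lt_or_ge n 5 with hn | hn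
  · exfalso
    have := aux_solv n (by omega)
    have h1 : Group.IsSolvable h.range := Group.isSolvable_of_surjective h.rangeRestrict_surjective
    have h2 : Group.IsSolvable T := Group.isSolvable_of_isSolvable_injective
      (f := (MulAut.conj (G := T)).codRestrict h.range fun t => hInn ⟨t, rfl⟩)
      (fun a b hab => hinj (congrArg Subtype.val hab))
    obtain ⟨a, b, hab⟩ := hTnab
    exact hab (IsSimpleGroup.comm_iff_isSolvable.2 h2 a b)
  · refine ⟨?_, hn⟩
    have hA : IsSimpleGroup (alternatingGroup (Fin n)) := alternatingGroup.isSimpleGroup (by simpa)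
    have hne : (MulAut.conj (G := T)).range ≠ ⊥ := by
      intro h0
      obtain ⟨a, b, hab⟩ := hTnab
      have h1 : ∀ t : T, MulAut.conj t = 1 := fun t => by
        rw [← Subgroup.mem_bot, ← h0]; exact ⟨t, rfl⟩
      exact hab (by rw [hinj ((h1 a).trans (map_one MulAut.conj).symm)]; simp)
    have hhinj : Function.Injective h := by
      rw [← MonoidHom.ker_eq_bot_iff]
      refine (hA.eq_bot_or_eq_top_of_normal _ inferInstance).resolve_right fun h0 => hne ?_
      rw [eq_bot_iff]
      refine hInn.trans ?_
      rintro _ ⟨x, rfl⟩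
      have : x ∈ h.ker := h0 ▸ Subgroup.mem_top x
      exact this
    have hN := aux_conj_range_normal (T := T)
    have htop : (MulAut.conj (G := T)).range.comap h = ⊤ := by
      refine (hA.eq_bot_or_eq_top_of_normal _ inferInstance).resolve_left fun h0 => hne ?_
      rw [← Subgroup.map_comap_eq_self hInn, h0, Subgroup.map_bot]
    have heq : (MulAut.conj (G := T)).range = h.range := by
      refine le_antisymm hInn ?_
      rintro _ ⟨x, rfl⟩
      have : x ∈ (MulAut.conj (G := T)).range.comap h := htop ▸ Subgroup.mem_top x
      exact this
    exact ⟨(MonoidHom.ofInjective hinj).trans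
      ((MulEquiv.subgroupCongr heq).trans (MonoidHom.ofInjective hhinj).symm)⟩

def auxF (n : ℕ) : Equiv.Perm (Fin n) →* Equiv.Perm (Fin (n + 1)) :=
  MonoidHom.mk' (fun e => Equiv.Perm.decomposeFin.symm (0, e)) (by
    intro a b
    ext x
    refine Fin.cases ?_ (fun i => ?_) x <;> simp)

theorem aux_emb {n : ℕ} (P : Subgroup (Equiv.Perm (Fin (n + 1))))
    (hP : alternatingGroup (Fin (n + 1)) ≤ P) :
    ∃ g : alternatingGroup (Fin n) →* MulAction.stabilizer P (0 : Fin (n + 1)),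
      commutator (MulAction.stabilizer P (0 : Fin (n + 1))) ≤ g.range := by
  have hs : ∀ e : Equiv.Perm (Fin n), Equiv.Perm.sign (auxF n e) = Equiv.Perm.sign e := by
    intro e
    simp [auxF, Equiv.Perm.decomposeFin.symm_sign]
  let g1 : alternatingGroup (Fin n) →* P :=
    ((auxF n).comp (alternatingGroup (Fin n)).subtype).codRestrict P (fun x => hP (by
      rw [Equiv.Perm.mem_alternatingGroup]
      exact (hs _).trans x.2))
  let g : alternatingGroup (Fin n) →* MulAction.stabilizer P (0 : Fin (n + 1)) :=
    g1.codRestrict _ (fun x => by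
      change auxF n x.1 0 = 0
      simp [auxF])
  refine ⟨g, ?_⟩
  let s : MulAction.stabilizer P (0 : Fin (n + 1)) →* ℤˣ :=
    Equiv.Perm.sign.comp (P.subtype.comp (MulAction.stabilizer P (0 : Fin (n + 1))).subtype)
  have h1 : commutator (MulAction.stabilizer P (0 : Fin (n + 1))) ≤ s.ker :=
    Abelianization.commutator_subset_ker s
  refine h1.trans ?_
  rintro ⟨⟨σ, hσP⟩, hσ⟩ hx
  have hσ0 : σ 0 = 0 := hσ
  have hsσ : Equiv.Perm.sign σ = 1 := hx
  have hd : auxF n (Equiv.Perm.decomposeFin σ).2 = σ := by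
    have e1 := Equiv.Perm.decomposeFin.symm_apply_apply σ
    have e2 : (Equiv.Perm.decomposeFin σ).1 = 0 := by
      rw [← hσ0]
      conv_rhs => rw [← e1]
      exact (Equiv.Perm.decomposeFin_symm_apply_zero _ _).symm
    conv_rhs => rw [← e1]
    change Equiv.Perm.decomposeFin.symm _ = _
    rw [← e2]
  refine ⟨⟨(Equiv.Perm.decomposeFin σ).2, ?_⟩, ?_⟩
  · rw [Equiv.Perm.mem_alternatingGroup, ← hs, hd, hsσ]
  · exact Subtype.ext (Subtype.ext hd)


/-- If `P` is `S_k` or `A_k` acting naturally on `{1,…,k}` (`k ≥ 2`), `Q` is a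
point stabiliser, `T` is a nonabelian simple group and `φ : Q → Aut(T)` satisfies
`Inn(T) ≤ φ(Q)`, then `T ≅ A_{k−1}` and `k ≥ 6`. -/
theorem stmt16 {k : ℕ} (hk : 2 ≤ k) (P : Subgroup (Equiv.Perm (Fin k)))
    (hP : P = ⊤ ∨ P = alternatingGroup (Fin k))
    {T : Type*} [Group T] [Finite T]
    (hT : IsSimpleGroup T) (hTnab : ∃ a b : T, a * b ≠ b * a)
    (φ : MulAction.stabilizer P (⟨0, by omega⟩ : Fin k) →* MulAut T)
    (hInn : (MulAut.conj (G := T)).range ≤ φ.range) :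
    Nonempty (T ≃* alternatingGroup (Fin (k - 1))) ∧ 6 ≤ k := by
  obtain ⟨n, rfl⟩ : ∃ n, k = n + 1 := ⟨k - 1, by omega⟩
  obtain ⟨g, hg⟩ := aux_emb P (by rcases hP with rfl | rfl <;> simp)
  obtain ⟨h1, h2⟩ := aux_main hT hTnab n (MonoidHom.comp φ g) (aux_range hT hTnab φ hInn g hg)
  exact ⟨h1, by omega⟩
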